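/- arXiv:2510.04289 — 2 statements merged into one kernel-verified Lean document; each statement's English description precedes it below -/
import Mathlib

section
/- Let α ∈ ℝ, β < 0, σ > 0, fix s > 0, and let g : ℝ → ℝ be continuous with |g(ξ)| ≤ C·exp(c·|ξ|) for some constants C, c > 0. Define u(t,x) := ∫_ℝ G(t,s;x,ξ)·g(ξ) dξ for 0 ≤ t < s and x ∈ ℝ, where G is the Vasicek Green's function. Then the integral converges absolutely for every such (t,x), u is of class C^{1,2} on [0,s) × ℝ, u satisfies ∂ₜu(t,x) + (α + βx)·∂ₓu(t,x) + (σ²/2)·∂²ₓₓu(t,x) − x·u(t,x) = 0 for all (t,x) ∈ [0,s) × ℝ, and lim_{t↑s} u(t,x) = g(x) for every x ∈ ℝ. -/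
/-- Squared width `Σ(t,s)²` of the Vasicek Green's function. -/
noncomputable def vasicekSigmaSq (β σ t s : ℝ) : ℝ :=
  -(σ ^ 2 / (2 * β)) * (1 - Real.exp (2 * β * (s - t)))

/-- Mean `μ(t,s;x)` of the Vasicek Green's function. -/
noncomputable def vasicekMu (α β σ t s x : ℝ) : ℝ :=
  x * Real.exp (β * (s - t)) - (α / β) * (1 - Real.exp (β * (s - t))) +
    (σ ^ 2 / (2 * β ^ 2)) *
      (Real.exp (-(β * (s - t))) + Real.exp (β * (s - t)) - 2)

/-- Factor `C₁(t,s;ξ)` of the Vasicek Green's function. -/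
noncomputable def vasicekC1 (α β σ t s ξ : ℝ) : ℝ :=
  Real.exp (-((σ ^ 2 * Real.exp (-(2 * β * (s - t)))
      - 4 * ξ * β ^ 2 * Real.exp (-(β * (s - t)))
      - 4 * σ ^ 2 * Real.exp (-(β * (s - t)))
      - 4 * α * β * Real.exp (-(β * (s - t)))) / (4 * β ^ 3)))

/-- Factor `C₂(t,s;ξ)` of the Vasicek Green's function. -/
noncomputable def vasicekC2 (α β σ t s ξ : ℝ) : ℝ :=
  Real.exp ((σ ^ 2 / (2 * β ^ 2) + α / β) * (s - t)
    - 3 * σ ^ 2 / (4 * β ^ 3) - ξ / β - α / β ^ 2)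

/-- The Vasicek Green's function
`G(t,s;x,ξ) = C₁C₂/(√(2π)Σ) · exp(−(ξ−μ)²/(2Σ²))`. -/
noncomputable def vasicekG (α β σ t s x ξ : ℝ) : ℝ :=
  vasicekC1 α β σ t s ξ * vasicekC2 α β σ t s ξ /
    (Real.sqrt (2 * Real.pi) * Real.sqrt (vasicekSigmaSq β σ t s)) *
    Real.exp (-((ξ - vasicekMu α β σ t s x) ^ 2 / (2 * vasicekSigmaSq β σ t s)))

/-- `f` is of class `C^{1,2}` on `I × ℝ`: it is jointly continuous there, once
continuously differentiable in the time variable and twice continuously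
differentiable in the space variable. -/
def C12On (f : ℝ → ℝ → ℝ) (I : Set ℝ) : Prop :=
  ContinuousOn (fun p : ℝ × ℝ => f p.1 p.2) (I ×ˢ (Set.univ : Set ℝ)) ∧
  (∀ x : ℝ, ∀ t ∈ I, DifferentiableAt ℝ (fun s => f s x) t) ∧
  (∀ t ∈ I, ContDiff ℝ 2 (fun x => f t x)) ∧
  ContinuousOn (fun p : ℝ × ℝ => deriv (fun s => f s p.2) p.1) (I ×ˢ (Set.univ : Set ℝ)) ∧
  ContinuousOn (fun p : ℝ × ℝ => deriv (fun x => f p.1 x) p.2) (I ×ˢ (Set.univ : Set ℝ)) ∧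
  ContinuousOn (fun p : ℝ × ℝ => deriv (deriv (fun x => f p.1 x)) p.2) (I ×ˢ (Set.univ : Set ℝ))

open MeasureTheory

noncomputable def vM (g : ℝ → ℝ) (n : ℕ) (p q : ℝ) : ℝ :=
  ∫ ξ : ℝ, ξ ^ n * Real.exp (p * ξ - q * ξ ^ 2) * g ξ

lemma vM_bound (g : ℝ → ℝ) (C c : ℝ) (hgrow : ∀ ξ : ℝ, |g ξ| ≤ C * Real.exp (c * |ξ|)) (n : ℕ) (B a : ℝ) (ha : 0 < a) :
    ∃ K : ℝ, ∀ p q ξ : ℝ, |p| ≤ B → a ≤ q →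
      ‖ξ ^ n * Real.exp (p * ξ - q * ξ ^ 2) * g ξ‖ ≤ K * Real.exp (-(a / 2) * ξ ^ 2) := by
  refine ⟨C * n.factorial * Real.exp ((B + 1 + c) ^ 2 / (2 * a)), fun p q ξ hp hq => ?_⟩
  have hC : 0 ≤ C := by
    have := (abs_nonneg _).trans (hgrow 0)
    simpa using this
  have h1 : |ξ| ^ n ≤ n.factorial * Real.exp |ξ| := by
    have := Real.pow_div_factorial_le_exp |ξ| (abs_nonneg _) n
    rwa [div_le_iff₀ (by positivity), mul_comm] at this
  have h2 : p * ξ - q * ξ ^ 2 ≤ B * |ξ| - a * ξ ^ 2 := by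
    have : p * ξ ≤ B * |ξ| := (le_abs_self _).trans (by rw [abs_mul]; gcongr)
    have : a * ξ ^ 2 ≤ q * ξ ^ 2 := by gcongr
    linarith
  have h3 : |ξ| + (B * |ξ| - a * ξ ^ 2) + c * |ξ| ≤ (B + 1 + c) ^ 2 / (2 * a) + -(a / 2) * ξ ^ 2 := by
    have e : (B + 1 + c) ^ 2 / (2 * a) + -(a / 2) * ξ ^ 2 - (|ξ| + (B * |ξ| - a * ξ ^ 2) + c * |ξ|)
       = ((B + 1 + c) - a * |ξ|) ^ 2 / (2 * a) := by
      rw [← sq_abs ξ]; field_simp; ring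
    have : 0 ≤ ((B + 1 + c) - a * |ξ|) ^ 2 / (2 * a) := by positivity
    linarith
  rw [norm_mul, norm_mul, norm_pow, Real.norm_eq_abs, Real.norm_eq_abs, Real.norm_eq_abs, Real.abs_exp]
  calc |ξ| ^ n * Real.exp (p * ξ - q * ξ ^ 2) * |g ξ|
      ≤ (n.factorial * Real.exp |ξ|) * Real.exp (B * |ξ| - a * ξ ^ 2) * (C * Real.exp (c * |ξ|)) := by
        gcongr; exact hgrow ξ
    _ = C * n.factorial * Real.exp (|ξ| + (B * |ξ| - a * ξ ^ 2) + c * |ξ|) := by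
        rw [Real.exp_add, Real.exp_add]; ring
    _ ≤ C * n.factorial * Real.exp ((B + 1 + c) ^ 2 / (2 * a) + -(a / 2) * ξ ^ 2) := by gcongr
    _ = _ := by rw [Real.exp_add]; ring

lemma vM_int (g : ℝ → ℝ) (hg : Continuous g) (C c : ℝ) (hgrow : ∀ ξ : ℝ, |g ξ| ≤ C * Real.exp (c * |ξ|)) (n : ℕ) (p q : ℝ) (hq : 0 < q) :
    Integrable (fun ξ : ℝ => ξ ^ n * Real.exp (p * ξ - q * ξ ^ 2) * g ξ) := by
  obtain ⟨K, hK⟩ := vM_bound g C c hgrow n |p| q hq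
  refine Integrable.mono' ((integrable_exp_neg_mul_sq (half_pos hq)).const_mul K) ?_ ?_
  · exact Continuous.aestronglyMeasurable (by fun_prop)
  · exact Filter.Eventually.of_forall fun ξ => hK p q ξ le_rfl le_rfl

lemma vM_fderiv (g : ℝ → ℝ) (hg : Continuous g) (C c : ℝ) (hgrow : ∀ ξ : ℝ, |g ξ| ≤ C * Real.exp (c * |ξ|)) (n : ℕ) (p q : ℝ) (hq : 0 < q) :
    HasFDerivAt (fun z : ℝ × ℝ => vM g n z.1 z.2)
      (vM g (n+1) p q • ContinuousLinearMap.fst ℝ ℝ ℝ - vM g (n+2) p q • ContinuousLinearMap.snd ℝ ℝ ℝ) (p, q) := by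
  obtain ⟨K1, hK1⟩ := vM_bound g C c hgrow (n+1) (|p| + q / 2) (q / 2) (half_pos hq)
  obtain ⟨K2, hK2⟩ := vM_bound g C c hgrow (n+2) (|p| + q / 2) (q / 2) (half_pos hq)
  have key := hasFDerivAt_integral_of_dominated_of_fderiv_le (𝕜 := ℝ) (μ := (volume : Measure ℝ))
    (F := fun (z : ℝ × ℝ) (ξ : ℝ) => ξ ^ n * Real.exp (z.1 * ξ - z.2 * ξ ^ 2) * g ξ)
    (F' := fun (z : ℝ × ℝ) (ξ : ℝ) =>
      (ξ ^ (n+1) * Real.exp (z.1 * ξ - z.2 * ξ ^ 2) * g ξ) • ContinuousLinearMap.fst ℝ ℝ ℝ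
      - (ξ ^ (n+2) * Real.exp (z.1 * ξ - z.2 * ξ ^ 2) * g ξ) • ContinuousLinearMap.snd ℝ ℝ ℝ)
    (x₀ := (p, q)) (s := Metric.ball (p, q) (q / 2))
    (bound := fun ξ => K1 * Real.exp (-(q / 2 / 2) * ξ ^ 2) + K2 * Real.exp (-(q / 2 / 2) * ξ ^ 2))
    (Metric.ball_mem_nhds _ (half_pos hq)) ?_ ?_ ?_ ?_ ?_ ?_
  · refine key.congr_fderiv ?_
    rw [integral_sub, integral_smul_const, integral_smul_const]
    · rfl
    · exact (vM_int g hg C c hgrow (n+1) p q hq).smul_const _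
    · exact (vM_int g hg C c hgrow (n+2) p q hq).smul_const _
  · exact Filter.Eventually.of_forall fun z => Continuous.aestronglyMeasurable (by fun_prop)
  · exact vM_int g hg C c hgrow n p q hq
  · exact Continuous.aestronglyMeasurable (by fun_prop)
  · refine Filter.Eventually.of_forall fun ξ z hz => ?_
    have hz' : |z.1 - p| < q / 2 ∧ |z.2 - q| < q / 2 := by
      simpa [Prod.dist_eq, Real.dist_eq] using hz
    have hp : |z.1| ≤ |p| + q / 2 := by
      have := abs_add_le (z.1 - p) p
      rw [sub_add_cancel] at this
      linarith
    have hq' : q / 2 ≤ z.2 := by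
      have := (abs_lt.1 hz'.2).1
      linarith
    refine (norm_sub_le _ _).trans (add_le_add ?_ ?_)
    · rw [norm_smul, ContinuousLinearMap.norm_fst, mul_one]
      exact hK1 _ _ _ hp hq'
    · rw [norm_smul, ContinuousLinearMap.norm_snd, mul_one]
      exact hK2 _ _ _ hp hq'
  · exact ((integrable_exp_neg_mul_sq (half_pos (half_pos hq))).const_mul K1).add
      ((integrable_exp_neg_mul_sq (half_pos (half_pos hq))).const_mul K2)
  · refine Filter.Eventually.of_forall fun ξ z hz => ?_
    have h1 : HasFDerivAt (fun z : ℝ × ℝ => z.1 * ξ - z.2 * ξ ^ 2)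
      (ξ • ContinuousLinearMap.fst ℝ ℝ ℝ - (ξ^2) • ContinuousLinearMap.snd ℝ ℝ ℝ) z :=
      (hasFDerivAt_fst.mul_const ξ).sub (hasFDerivAt_snd.mul_const (ξ^2))
    have h2 := (h1.exp.const_mul (ξ ^ n)).mul_const (g ξ)
    refine h2.congr_fderiv ?_
    ext <;> simp <;> ring

lemma vM_deriv (g : ℝ → ℝ) (hg : Continuous g) (C c : ℝ) (hgrow : ∀ ξ : ℝ, |g ξ| ≤ C * Real.exp (c * |ξ|)) (n : ℕ)
    (P Q : ℝ → ℝ) (P' Q' t : ℝ) (hP : HasDerivAt P P' t) (hQ : HasDerivAt Q Q' t) (hq : 0 < Q t) :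
    HasDerivAt (fun t => vM g n (P t) (Q t)) (vM g (n+1) (P t) (Q t) * P' - vM g (n+2) (P t) (Q t) * Q') t := by
  have := (vM_fderiv g hg C c hgrow n (P t) (Q t) hq).comp_hasDerivAt t (hP.prodMk hQ)
  refine HasDerivAt.congr_deriv (f := fun t => vM g n (P t) (Q t)) this ?_
  simp

lemma vM_cont (g : ℝ → ℝ) (hg : Continuous g) (C c : ℝ) (hgrow : ∀ ξ : ℝ, |g ξ| ≤ C * Real.exp (c * |ξ|)) (n : ℕ)
    (P Q : ℝ × ℝ → ℝ) (S : Set (ℝ × ℝ)) (hP : ContinuousOn P S) (hQ : ContinuousOn Q S) (hq : ∀ z ∈ S, 0 < Q z) :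
    ContinuousOn (fun z => vM g n (P z) (Q z)) S := by
  intro z hz
  exact ContinuousAt.comp_continuousWithinAt (f := fun z => (P z, Q z))
   (vM_fderiv g hg C c hgrow n (P z) (Q z) (hq z hz)).continuousAt ((hP z hz).prodMk (hQ z hz))

noncomputable def vK (β s t : ℝ) : ℝ := (Real.exp (-(β * (s - t))) - 1) / β

noncomputable def vL (α β σ s t : ℝ) : ℝ :=
  -((σ ^ 2 * Real.exp (-(2 * β * (s - t)))
      - 4 * σ ^ 2 * Real.exp (-(β * (s - t)))
      - 4 * α * β * Real.exp (-(β * (s - t)))) / (4 * β ^ 3)) +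
  ((σ ^ 2 / (2 * β ^ 2) + α / β) * (s - t) - 3 * σ ^ 2 / (4 * β ^ 3) - α / β ^ 2)

noncomputable def vP (α β σ s t x : ℝ) : ℝ :=
  vasicekMu α β σ t s x / vasicekSigmaSq β σ t s + vK β s t

noncomputable def vQ (β σ s t : ℝ) : ℝ := 1 / (2 * vasicekSigmaSq β σ t s)

noncomputable def vC (α β σ s t x : ℝ) : ℝ :=
  vL α β σ s t - vasicekMu α β σ t s x ^ 2 / (2 * vasicekSigmaSq β σ t s)
    - Real.log (vasicekSigmaSq β σ t s) / 2 - Real.log (2 * Real.pi) / 2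

lemma vS_pos (β σ s t : ℝ) (hβ : β < 0) (hσ : 0 < σ) (ht : t < s) :
    0 < vasicekSigmaSq β σ t s := by
  unfold vasicekSigmaSq
  have h1 : 2 * β * (s - t) < 0 := by nlinarith
  have h2 : Real.exp (2 * β * (s - t)) < 1 := by rw [← Real.exp_zero]; exact Real.exp_lt_exp.2 h1
  have h3 : 0 < -(σ ^ 2 / (2 * β)) := by
    rw [neg_pos]; exact div_neg_of_pos_of_neg (by positivity) (by linarith)
  exact mul_pos h3 (by linarith)

lemma vCC (α β σ s t ξ : ℝ) (hβ : β < 0) :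
    vasicekC1 α β σ t s ξ * vasicekC2 α β σ t s ξ = Real.exp (vL α β σ s t + vK β s t * ξ) := by
  unfold vasicekC1 vasicekC2 vL vK
  rw [← Real.exp_add]
  congr 1
  field_simp
  ring

lemma vexp_log (a : ℝ) (ha : 0 < a) : Real.exp (-(Real.log a / 2)) = (Real.sqrt a)⁻¹ := by
  rw [Real.exp_neg, ← Real.log_sqrt ha.le, Real.exp_log (Real.sqrt_pos.2 ha)]

lemma vG_eq (α β σ s t x ξ : ℝ) (hβ : β < 0) (hσ : 0 < σ) (ht : t < s) :
    vasicekG α β σ t s x ξ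
      = Real.exp (vC α β σ s t x) * (ξ ^ 0 * Real.exp (vP α β σ s t x * ξ - vQ β σ s t * ξ ^ 2)) := by
  have hv := vS_pos β σ s t hβ hσ ht
  unfold vasicekG
  rw [vCC α β σ s t ξ hβ, pow_zero, one_mul, div_eq_mul_inv, mul_inv,
    ← vexp_log _ hv, ← vexp_log _ (by positivity : 0 < 2 * Real.pi),
    ← Real.exp_add, ← Real.exp_add, ← Real.exp_add, ← Real.exp_add]
  congr 1
  unfold vC vP vQ
  generalize vasicekSigmaSq β σ t s = v at hv
  field_simp
  ring

lemma vE_inv (β s t : ℝ) : Real.exp (-β * (s - t)) = (Real.exp (β * (s - t)))⁻¹ := by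
  rw [← Real.exp_neg, neg_mul]

lemma vE_deriv (β s t : ℝ) : HasDerivAt (fun t => Real.exp (β * (s - t))) (-β * Real.exp (β * (s - t))) t := by
  have h : HasDerivAt (fun t => β * (s - t)) (-β) t := by
    simpa using ((hasDerivAt_id t).const_sub s).const_mul β
  simpa [mul_comm] using h.exp

lemma vS_deriv (β σ s t : ℝ) (hβ : β < 0) :
    HasDerivAt (fun t => vasicekSigmaSq β σ t s) (-σ ^ 2 * Real.exp (β * (s - t)) ^ 2) t := by
  have h := ((vE_deriv (2 * β) s t).const_sub 1).const_mul (-(σ ^ 2 / (2 * β)))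
  refine HasDerivAt.congr_deriv (f := fun t => vasicekSigmaSq β σ t s) h ?_
  rw [← Real.exp_nat_mul]
  push_cast
  rw [← mul_assoc]
  have hb := hβ.ne
  field_simp

lemma vS_eq (β σ s t : ℝ) : vasicekSigmaSq β σ t s =
  -(σ ^ 2 / (2 * β)) * (1 - Real.exp (β * (s - t)) ^ 2) := by
  unfold vasicekSigmaSq
  rw [← Real.exp_nat_mul]
  push_cast
  rw [← mul_assoc]

lemma vK_deriv (β s t : ℝ) (hβ : β < 0) :
    HasDerivAt (fun t => vK β s t) (Real.exp (β * (s - t)))⁻¹ t := by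
  have h := (((vE_deriv (-β) s t)).sub_const 1).div_const β
  have e : (fun t => vK β s t) = fun t => (Real.exp (-β * (s - t)) - 1) / β := by
    funext t; simp [vK]
  rw [e]
  refine h.congr_deriv ?_
  rw [vE_inv]
  have := hβ.ne
  field_simp

lemma vMu_deriv (α β σ s t x : ℝ) (hβ : β < 0) :
    HasDerivAt (fun t => vasicekMu α β σ t s x)
     (-(Real.exp (β * (s - t)))⁻¹ * vasicekSigmaSq β σ t s - (α + β * x) * Real.exp (β * (s - t))) t := by
  have h1 := vE_deriv β s t
  have h2 := vE_deriv (-β) s t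
  have h := ((h1.const_mul x).sub ((h1.const_sub 1).const_mul (α / β))).add
    (((h2.add h1).sub_const 2).const_mul (σ ^ 2 / (2 * β ^ 2)))
  have e : (fun t => vasicekMu α β σ t s x) = fun t => x * Real.exp (β * (s - t)) - (α / β) * (1 - Real.exp (β * (s - t))) +
    (σ ^ 2 / (2 * β ^ 2)) *
      (Real.exp (-β * (s - t)) + Real.exp (β * (s - t)) - 2) := by
    funext t; simp [vasicekMu]
  rw [e]
  refine HasDerivAt.congr_deriv h ?_
  rw [vS_eq, vE_inv]
  have hb := hβ.ne
  have := (Real.exp_pos (β * (s - t))).ne'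
  generalize Real.exp (β * (s - t)) = E at *
  field_simp
  ring

lemma vMu_derivx (α β σ s t x : ℝ) :
    HasDerivAt (fun x => vasicekMu α β σ t s x) (Real.exp (β * (s - t))) x := by
  unfold vasicekMu
  have h := (((hasDerivAt_id x).mul_const (Real.exp (β * (s - t)))).sub_const ((α / β) * (1 - Real.exp (β * (s - t))))).add_const ((σ ^ 2 / (2 * β ^ 2)) *
      (Real.exp (-(β * (s - t))) + Real.exp (β * (s - t)) - 2))
  simpa using h

lemma vL_deriv (α β σ s t x : ℝ) (hβ : β < 0) :
    HasDerivAt (fun t => vL α β σ s t)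
     (x - vasicekMu α β σ t s x / Real.exp (β * (s - t))) t := by
  have h2 := vE_deriv (-β) s t
  have h3 := vE_deriv (-(2 * β)) s t
  have h4 : HasDerivAt (fun t => s - t) (-1) t := by
    simpa using ((hasDerivAt_id t).const_sub s)
  have h := ((((h3.const_mul (σ ^ 2)).sub (h2.const_mul (4 * σ ^ 2))).sub
    (h2.const_mul (4 * α * β))).div_const (4 * β ^ 3)).neg.add
    (((h4.const_mul (σ ^ 2 / (2 * β ^ 2) + α / β)).sub_const (3 * σ ^ 2 / (4 * β ^ 3))).sub_const (α / β ^ 2))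
  have e : (fun t => vL α β σ s t) = fun t => -((σ ^ 2 * Real.exp (-(2 * β) * (s - t))
      - 4 * σ ^ 2 * Real.exp (-β * (s - t))
      - 4 * α * β * Real.exp (-β * (s - t))) / (4 * β ^ 3)) +
  ((σ ^ 2 / (2 * β ^ 2) + α / β) * (s - t) - 3 * σ ^ 2 / (4 * β ^ 3) - α / β ^ 2) := by
    funext t; simp [vL]
  rw [e]
  refine HasDerivAt.congr_deriv h ?_
  have e2 : Real.exp (-(2 * β) * (s - t)) = (Real.exp (β * (s - t)) ^ 2)⁻¹ := by
    rw [← Real.exp_nat_mul, ← Real.exp_neg]; congr 1; push_cast; ring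
  unfold vasicekMu
  rw [e2, vE_inv, Real.exp_neg]
  have hb := hβ.ne
  have := (Real.exp_pos (β * (s - t))).ne'
  generalize Real.exp (β * (s - t)) = E at *
  field_simp
  ring

/-- formulas for the derivatives -/
noncomputable def vCt (α β σ s t x : ℝ) : ℝ :=
  let E := Real.exp (β * (s - t))
  let v := vasicekSigmaSq β σ t s
  let m := vasicekMu α β σ t s x
  (x - m / E) - (m * (-E⁻¹ * v - (α + β * x) * E) / v + m ^ 2 * σ ^ 2 * E ^ 2 / (2 * v ^ 2))
    + σ ^ 2 * E ^ 2 / (2 * v)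

noncomputable def vPt (α β σ s t x : ℝ) : ℝ :=
  let E := Real.exp (β * (s - t))
  let v := vasicekSigmaSq β σ t s
  let m := vasicekMu α β σ t s x
  (-E⁻¹ * v - (α + β * x) * E) / v + m * σ ^ 2 * E ^ 2 / v ^ 2 + E⁻¹

noncomputable def vPx (β σ s t : ℝ) : ℝ :=
  Real.exp (β * (s - t)) / vasicekSigmaSq β σ t s

noncomputable def vQt (β σ s t : ℝ) : ℝ :=
  σ ^ 2 * Real.exp (β * (s - t)) ^ 2 / (2 * vasicekSigmaSq β σ t s ^ 2)

noncomputable def vCx (α β σ s t x : ℝ) : ℝ :=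
  - vasicekMu α β σ t s x * Real.exp (β * (s - t)) / vasicekSigmaSq β σ t s

noncomputable def vCxx (β σ s t : ℝ) : ℝ :=
  - Real.exp (β * (s - t)) ^ 2 / vasicekSigmaSq β σ t s

lemma vQ_pos (β σ s t : ℝ) (hβ : β < 0) (hσ : 0 < σ) (ht : t < s) : 0 < vQ β σ s t := by
  have := vS_pos β σ s t hβ hσ ht
  unfold vQ; positivity

lemma vC_dt (α β σ s t x : ℝ) (hβ : β < 0) (hσ : 0 < σ) (ht : t < s) :
    HasDerivAt (fun t => vC α β σ s t x) (vCt α β σ s t x) t := by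
  have hv := vS_pos β σ s t hβ hσ ht
  have h := (((vL_deriv α β σ s t x hβ).sub (((vMu_deriv α β σ s t x hβ).pow 2).div
    ((vS_deriv β σ s t hβ).const_mul 2) (by positivity))).sub
    (((vS_deriv β σ s t hβ).log hv.ne').div_const 2)).sub_const (Real.log (2 * Real.pi) / 2)
  refine HasDerivAt.congr_deriv (f := fun t => vC α β σ s t x) h ?_
  have := (Real.exp_pos (β * (s - t))).ne'
  simp only [vCt, Pi.pow_apply]
  generalize Real.exp (β * (s - t)) = E at *
  generalize vasicekSigmaSq β σ t s = v at *
  field_simp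
  ring

lemma vP_dt (α β σ s t x : ℝ) (hβ : β < 0) (hσ : 0 < σ) (ht : t < s) :
    HasDerivAt (fun t => vP α β σ s t x) (vPt α β σ s t x) t := by
  have hv := vS_pos β σ s t hβ hσ ht
  have h := ((vMu_deriv α β σ s t x hβ).div (vS_deriv β σ s t hβ) hv.ne').add (vK_deriv β s t hβ)
  refine HasDerivAt.congr_deriv (f := fun t => vP α β σ s t x) h ?_
  have := (Real.exp_pos (β * (s - t))).ne'
  simp only [vPt]
  generalize Real.exp (β * (s - t)) = E at *
  generalize vasicekSigmaSq β σ t s = v at *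
  field_simp
  ring

lemma vQ_dt (β σ s t : ℝ) (hβ : β < 0) (hσ : 0 < σ) (ht : t < s) :
    HasDerivAt (fun t => vQ β σ s t) (vQt β σ s t) t := by
  have hv := vS_pos β σ s t hβ hσ ht
  have h := (hasDerivAt_const t (1:ℝ)).div ((vS_deriv β σ s t hβ).const_mul 2) (by positivity)
  refine HasDerivAt.congr_deriv (f := fun t => vQ β σ s t) h ?_
  simp only [vQt]
  generalize Real.exp (β * (s - t)) = E at *
  generalize vasicekSigmaSq β σ t s = v at *
  field_simp
  ring

lemma vC_dx (α β σ s t x : ℝ) :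
    HasDerivAt (fun x => vC α β σ s t x) (vCx α β σ s t x) x := by
  have h := ((((vMu_derivx α β σ s t x).pow 2).div_const (2 * vasicekSigmaSq β σ t s)).const_sub
    (vL α β σ s t)).sub_const (Real.log (vasicekSigmaSq β σ t s) / 2) |>.sub_const (Real.log (2 * Real.pi) / 2)
  refine HasDerivAt.congr_deriv (f := fun x => vC α β σ s t x) h ?_
  simp only [vCx]
  field_simp
  ring

lemma vCx_dx (α β σ s t x : ℝ) :
    HasDerivAt (fun x => vCx α β σ s t x) (vCxx β σ s t) x := by
  have h := (((vMu_derivx α β σ s t x).neg.mul_const (Real.exp (β * (s - t)))).div_const (vasicekSigmaSq β σ t s))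
  refine HasDerivAt.congr_deriv (f := fun x => vCx α β σ s t x) h ?_
  simp only [vCxx]
  ring

lemma vP_dx (α β σ s t x : ℝ) :
    HasDerivAt (fun x => vP α β σ s t x) (vPx β σ s t) x :=
  ((vMu_derivx α β σ s t x).div_const (vasicekSigmaSq β σ t s)).add_const (vK β s t)


lemma vterm (α β σ s : ℝ) (hβ : β < 0) (hσ : 0 < σ)
    (g : ℝ → ℝ) (hg : Continuous g) (C c : ℝ)
    (hgrow : ∀ ξ : ℝ, |g ξ| ≤ C * Real.exp (c * |ξ|)) (hc : 0 < c) (x : ℝ) :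
    Filter.Tendsto (fun t => ∫ ξ : ℝ, vasicekG α β σ t s x ξ * g ξ)
      (nhdsWithin s (Set.Iio s)) (nhds (g x)) := by
  have hC : 0 ≤ C := by
    have := (abs_nonneg _).trans (hgrow 0)
    simpa using this
  set w : ℝ → ℝ := fun t => Real.sqrt (vasicekSigmaSq β σ t s) with hw
  set m : ℝ → ℝ := fun t => vasicekMu α β σ t s x with hm
  set k : ℝ → ℝ := fun t => vK β s t with hk
  set L : ℝ → ℝ := fun t => vL α β σ s t with hL
  have cw : Continuous w := by simp only [hw, vasicekSigmaSq]; fun_prop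
  have cm : Continuous m := by simp only [hm, vasicekMu]; fun_prop
  have ck : Continuous k := by simp only [hk, vK]; fun_prop
  have cL : Continuous L := by simp only [hL, vL]; fun_prop
  have ws : w s = 0 := by simp [hw, vasicekSigmaSq]
  have ms : m s = x := by simp [hm, vasicekMu]; right; norm_num
  have ks : k s = 0 := by simp [hk, vK]
  have Ls : L s = 0 := by simp [hL, vL]; field_simp; ring
  set F : ℝ → ℝ → ℝ := fun t z =>
    (Real.sqrt (2 * Real.pi))⁻¹ * Real.exp (L t + k t * (m t + w t * z)) * Real.exp (-(1 / 2) * z ^ 2)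
      * g (m t + w t * z) with hF
  have hev : ∀ t < s, ∫ ξ : ℝ, vasicekG α β σ t s x ξ * g ξ = ∫ z, F t z := by
    intro t ht
    have hv := vS_pos β σ s t hβ hσ ht
    have hwp : 0 < w t := Real.sqrt_pos.2 hv
    have hw2 : vasicekSigmaSq β σ t s = w t ^ 2 := (Real.sq_sqrt hv.le).symm
    have h1 := integral_add_left_eq_self (μ := (volume : Measure ℝ))
      (fun ξ : ℝ => vasicekG α β σ t s x ξ * g ξ) (m t)
    have h2 := Measure.integral_comp_mul_left
      (fun y : ℝ => vasicekG α β σ t s x (m t + y) * g (m t + y)) (w t)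
    rw [h1, abs_of_pos (inv_pos.2 hwp), smul_eq_mul] at h2
    have h3 : ∫ ξ : ℝ, vasicekG α β σ t s x ξ * g ξ
        = w t * ∫ z, vasicekG α β σ t s x (m t + w t * z) * g (m t + w t * z) := by
      rw [h2]; field_simp
    rw [h3, ← integral_const_mul]
    congr 1
    funext z
    simp only [hF, vasicekG, vCC α β σ s t _ hβ]
    change w t * (Real.exp (L t + k t * _) / (_ * w t) * Real.exp (-((m t + w t * z - m t) ^ 2 / _)) * _) = _
    rw [hw2]
    have e : -((m t + w t * z - m t) ^ 2 / (2 * w t ^ 2)) = -(1 / 2) * z ^ 2 := by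
      field_simp; ring
    rw [e]
    field_simp
  have hlim : ∫ z, F s z = g x := by
    simp only [hF, ws, ms, ks, Ls]
    simp only [zero_mul, add_zero, Real.exp_zero, mul_one]
    rw [integral_mul_const, integral_const_mul, integral_gaussian]
    rw [show Real.pi / (1 / 2) = 2 * Real.pi by ring, inv_mul_cancel₀ (by positivity), one_mul]
  rw [← hlim]
  have hcong : (fun t => ∫ z, F t z) =ᶠ[nhdsWithin s (Set.Iio s)]
      fun t => ∫ ξ : ℝ, vasicekG α β σ t s x ξ * g ξ := by
    filter_upwards [self_mem_nhdsWithin] with t ht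
    exact (hev t ht).symm
  refine Filter.Tendsto.congr' hcong ?_
  have small : ∀ f : ℝ → ℝ, Continuous f → ∀ a, |f s| < a →
      ∀ᶠ t in nhdsWithin s (Set.Iio s), |f t| < a := by
    intro f hf a ha
    exact (hf.abs.continuousAt.eventually_lt continuousAt_const ha).filter_mono nhdsWithin_le_nhds
  have hint := vM_int (fun z => Real.exp ((1 + c) * |z|)) (by fun_prop) 1 (1 + c)
    (fun z => by simp) 0 0 (1 / 2) (by norm_num)
  refine tendsto_integral_filter_of_dominated_convergence
    (fun z => ((Real.sqrt (2 * Real.pi))⁻¹ * Real.exp (1 + (|x| + 1)) * (C * Real.exp (c * (|x| + 1)))) *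
      (z ^ 0 * Real.exp (0 * z - 1 / 2 * z ^ 2) * Real.exp ((1 + c) * |z|))) ?_ ?_ (hint.const_mul _) ?_
  · refine Filter.Eventually.of_forall fun t => Continuous.aestronglyMeasurable ?_
    simp only [hF]; fun_prop
  · filter_upwards [small w cw 1 (by simp [ws]), small m cm (|x| + 1) (by simp [ms]),
      small k ck 1 (by simp [ks]), small L cL 1 (by simp [Ls])] with t h1 h2 h3 h4
    refine Filter.Eventually.of_forall fun z => ?_
    have h5 : |m t + w t * z| ≤ |x| + 1 + |z| := by
      refine (abs_add_le _ _).trans ?_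
      rw [abs_mul]
      have : |w t| * |z| ≤ 1 * |z| := by gcongr
      linarith
    have h6 : L t + k t * (m t + w t * z) ≤ 1 + (|x| + 1) + |z| := by
      have a1 := le_abs_self (L t)
      have a2 : k t * (m t + w t * z) ≤ 1 * (|x| + 1 + |z|) := by
        refine (le_abs_self _).trans ?_
        rw [abs_mul]
        gcongr
      linarith
    simp only [hF]
    rw [norm_mul, norm_mul, norm_mul, Real.norm_eq_abs, Real.norm_eq_abs, Real.norm_eq_abs,
      Real.norm_eq_abs, Real.abs_exp, Real.abs_exp, abs_of_nonneg (by positivity)]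
    calc _ ≤ (Real.sqrt (2 * Real.pi))⁻¹ * Real.exp (1 + (|x| + 1) + |z|) * Real.exp (-(1 / 2) * z ^ 2)
          * (C * Real.exp (c * (|x| + 1 + |z|))) := by
          gcongr
          exact (hgrow _).trans (by gcongr)
      _ = _ := by
          rw [show c * (|x| + 1 + |z|) = c * (|x| + 1) + c * |z| by ring,
            show (1 + c) * |z| = |z| + c * |z| by ring, Real.exp_add (1 + (|x| + 1)), Real.exp_add (c * (|x| + 1)),
            Real.exp_add |z|, zero_mul, zero_sub, neg_mul, pow_zero]
          ring
  · refine Filter.Eventually.of_forall fun z => ?_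
    have : Continuous fun t => F t z := by simp only [hF]; fun_prop
    exact (this.tendsto s).mono_left nhdsWithin_le_nhds

/-- The semi-analytic representation `u(t,x) = ∫ G(t,s;x,ξ)g(ξ)dξ` built from the
Vasicek Green's function solves the Vasicek pricing PDE on `[0,s) × ℝ` and attains
the terminal datum `g` as `t ↑ s`, for any continuous datum of exponential growth. -/
theorem vasicek_semianalytic_solution
    (α β σ s : ℝ) (hβ : β < 0) (hσ : 0 < σ) (hs : 0 < s)
    (g : ℝ → ℝ) (hg : Continuous g)
    (C c : ℝ) (hC : 0 < C) (hc : 0 < c)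
    (hgrow : ∀ ξ : ℝ, |g ξ| ≤ C * Real.exp (c * |ξ|))
    (u : ℝ → ℝ → ℝ)
    (hu : ∀ t x : ℝ, u t x = ∫ ξ : ℝ, vasicekG α β σ t s x ξ * g ξ) :
    (∀ t ∈ Set.Ico (0 : ℝ) s, ∀ x : ℝ,
      MeasureTheory.Integrable (fun ξ => vasicekG α β σ t s x ξ * g ξ)) ∧
    C12On u (Set.Ico (0 : ℝ) s) ∧
    (∀ t ∈ Set.Ico (0 : ℝ) s, ∀ x : ℝ,
      deriv (fun r => u r x) t + (α + β * x) * deriv (fun y => u t y) x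
        + σ ^ 2 / 2 * deriv (deriv (fun y => u t y)) x - x * u t x = 0) ∧
    (∀ x : ℝ,
      Filter.Tendsto (fun t => u t x) (nhdsWithin s (Set.Iio s)) (nhds (g x))) := by
  have hS : ∀ t < s, 0 < vasicekSigmaSq β σ t s := fun t ht => vS_pos β σ s t hβ hσ ht
  have hQp : ∀ t < s, 0 < vQ β σ s t := fun t ht => vQ_pos β σ s t hβ hσ ht
  have hueq : ∀ t < s, ∀ x, u t x
      = Real.exp (vC α β σ s t x) * vM g 0 (vP α β σ s t x) (vQ β σ s t) := by
    intro t ht x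
    rw [hu, vM, ← integral_const_mul]
    congr 1
    funext ξ
    rw [vG_eq α β σ s t x ξ hβ hσ ht]
    ring
  have dt : ∀ t < s, ∀ x, HasDerivAt (fun r => u r x)
      (Real.exp (vC α β σ s t x) * (vCt α β σ s t x * vM g 0 (vP α β σ s t x) (vQ β σ s t)
        + vPt α β σ s t x * vM g 1 (vP α β σ s t x) (vQ β σ s t)
        - vQt β σ s t * vM g 2 (vP α β σ s t x) (vQ β σ s t))) t := by
    intro t ht x
    have h := (vC_dt α β σ s t x hβ hσ ht).exp.mul
      (vM_deriv g hg C c hgrow 0 _ _ _ _ t (vP_dt α β σ s t x hβ hσ ht) (vQ_dt β σ s t hβ hσ ht) (hQp t ht))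
    have he : (fun r => u r x) =ᶠ[nhds t]
        fun r => Real.exp (vC α β σ s r x) * vM g 0 (vP α β σ s r x) (vQ β σ s r) := by
      filter_upwards [Iio_mem_nhds ht] with r hr
      exact hueq r hr x
    refine (HasDerivAt.congr_of_eventuallyEq h he).congr_deriv ?_
    ring
  have dM : ∀ t < s, ∀ n x, HasDerivAt (fun y => vM g n (vP α β σ s t y) (vQ β σ s t))
      (vM g (n + 1) (vP α β σ s t x) (vQ β σ s t) * vPx β σ s t) x := by
    intro t ht n x
    refine (vM_deriv g hg C c hgrow n _ (fun _ => vQ β σ s t) _ _ x (vP_dx α β σ s t x)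
      (hasDerivAt_const x _) (hQp t ht)).congr_deriv ?_
    simp
  have dx : ∀ t < s, ∀ x, HasDerivAt (fun y => u t y)
      (Real.exp (vC α β σ s t x) * (vCx α β σ s t x * vM g 0 (vP α β σ s t x) (vQ β σ s t)
        + vPx β σ s t * vM g 1 (vP α β σ s t x) (vQ β σ s t))) x := by
    intro t ht x
    have h := (vC_dx α β σ s t x).exp.mul (dM t ht 0 x)
    have he : (fun y => u t y)
        = fun y => Real.exp (vC α β σ s t y) * vM g 0 (vP α β σ s t y) (vQ β σ s t) :=
      funext (hueq t ht)
    rw [he]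
    refine HasDerivAt.congr_deriv h ?_
    ring
  have dx' : ∀ t < s, deriv (fun y => u t y) = fun x =>
      (Real.exp (vC α β σ s t x) * (vCx α β σ s t x * vM g 0 (vP α β σ s t x) (vQ β σ s t)
        + vPx β σ s t * vM g 1 (vP α β σ s t x) (vQ β σ s t))) :=
    fun t ht => funext fun x => (dx t ht x).deriv
  have dxx : ∀ t < s, ∀ x, HasDerivAt (deriv (fun y => u t y))
      (Real.exp (vC α β σ s t x) * ((vCx α β σ s t x ^ 2 + vCxx β σ s t) * vM g 0 (vP α β σ s t x) (vQ β σ s t)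
        + 2 * vCx α β σ s t x * vPx β σ s t * vM g 1 (vP α β σ s t x) (vQ β σ s t)
        + vPx β σ s t ^ 2 * vM g 2 (vP α β σ s t x) (vQ β σ s t))) x := by
    intro t ht x
    rw [dx' t ht]
    have h := (vC_dx α β σ s t x).exp.mul
      (((vCx_dx α β σ s t x).mul (dM t ht 0 x)).add ((dM t ht 1 x).const_mul (vPx β σ s t)))
    refine HasDerivAt.congr_deriv h ?_
    simp only [Pi.add_apply, Pi.mul_apply]
    ring
  -- continuity
  set S : Set (ℝ × ℝ) := Set.Ico (0 : ℝ) s ×ˢ (Set.univ : Set ℝ) with hSdef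
  have hlt : ∀ z ∈ S, z.1 < s := fun z hz => hz.1.2
  have hv0 : ∀ z ∈ S, vasicekSigmaSq β σ z.1 s ≠ 0 := fun z hz => (hS z.1 (hlt z hz)).ne'
  have cS : ContinuousOn (fun z : ℝ × ℝ => vasicekSigmaSq β σ z.1 s) S := by
    unfold vasicekSigmaSq; fun_prop
  have cMu : ContinuousOn (fun z : ℝ × ℝ => vasicekMu α β σ z.1 s z.2) S := by
    unfold vasicekMu; fun_prop
  have cE : ContinuousOn (fun z : ℝ × ℝ => Real.exp (β * (s - z.1))) S := by fun_prop
  have cEi : ContinuousOn (fun z : ℝ × ℝ => (Real.exp (β * (s - z.1)))⁻¹) S :=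
    cE.inv₀ fun z _ => (Real.exp_pos _).ne'
  have cSi : ContinuousOn (fun z : ℝ × ℝ => (vasicekSigmaSq β σ z.1 s)⁻¹) S := cS.inv₀ hv0
  have cLog : ContinuousOn (fun z : ℝ × ℝ => Real.log (vasicekSigmaSq β σ z.1 s)) S := cS.log hv0
  have cL : ContinuousOn (fun z : ℝ × ℝ => vL α β σ s z.1) S := by
    unfold vL; fun_prop
  have cK : ContinuousOn (fun z : ℝ × ℝ => vK β s z.1) S := by
    unfold vK; fun_prop
  have cQ : ContinuousOn (fun z : ℝ × ℝ => vQ β σ s z.1) S := by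
    simp only [vQ, div_eq_mul_inv, mul_inv]; fun_prop
  have cP : ContinuousOn (fun z : ℝ × ℝ => vP α β σ s z.1 z.2) S := by
    simp only [vP, div_eq_mul_inv, mul_inv]; fun_prop
  have cC : ContinuousOn (fun z : ℝ × ℝ => vC α β σ s z.1 z.2) S := by
    simp only [vC, div_eq_mul_inv, mul_inv]; fun_prop
  have cCt : ContinuousOn (fun z : ℝ × ℝ => vCt α β σ s z.1 z.2) S := by
    simp only [vCt, div_eq_mul_inv, mul_inv, ← inv_pow]; fun_prop
  have cPt : ContinuousOn (fun z : ℝ × ℝ => vPt α β σ s z.1 z.2) S := by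
    simp only [vPt, div_eq_mul_inv, mul_inv, ← inv_pow]; fun_prop
  have cQt : ContinuousOn (fun z : ℝ × ℝ => vQt β σ s z.1) S := by
    simp only [vQt, div_eq_mul_inv, mul_inv, ← inv_pow]; fun_prop
  have cCx : ContinuousOn (fun z : ℝ × ℝ => vCx α β σ s z.1 z.2) S := by
    simp only [vCx, div_eq_mul_inv, mul_inv, ← inv_pow]; fun_prop
  have cCxx : ContinuousOn (fun z : ℝ × ℝ => vCxx β σ s z.1) S := by
    simp only [vCxx, div_eq_mul_inv, mul_inv, ← inv_pow]; fun_prop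
  have cPx : ContinuousOn (fun z : ℝ × ℝ => vPx β σ s z.1) S := by
    simp only [vPx, div_eq_mul_inv, mul_inv, ← inv_pow]; fun_prop
  have cM : ∀ n, ContinuousOn (fun z : ℝ × ℝ => vM g n (vP α β σ s z.1 z.2) (vQ β σ s z.1)) S :=
    fun n => vM_cont g hg C c hgrow n _ _ S cP cQ fun z hz => hQp _ (hlt z hz)
  have cM0 := cM 0
  have cM1 := cM 1
  have cM2 := cM 2
  have cdxx : ContinuousOn (fun p : ℝ × ℝ => deriv (deriv (fun x => u p.1 x)) p.2) S := by
    refine ContinuousOn.congr ?_ fun z hz => (dxx z.1 (hlt z hz) z.2).deriv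
    fun_prop
  refine ⟨?_, ⟨?_, ?_, ?_, ?_, ?_, cdxx⟩, ?_, ?_⟩
  · intro t ht x
    have h := (vM_int g hg C c hgrow 0 (vP α β σ s t x) (vQ β σ s t) (hQp t ht.2)).const_mul
      (Real.exp (vC α β σ s t x))
    refine h.congr (Filter.Eventually.of_forall fun ξ => ?_)
    simp only [vG_eq α β σ s t x ξ hβ hσ ht.2]
    ring
  · refine ContinuousOn.congr (f := fun z : ℝ × ℝ => Real.exp (vC α β σ s z.1 z.2)
      * vM g 0 (vP α β σ s z.1 z.2) (vQ β σ s z.1)) ?_ fun z hz => hueq z.1 (hlt z hz) z.2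
    fun_prop
  · intro x t ht
    exact (dt t ht.2 x).differentiableAt
  · intro t ht
    have h2 : Continuous (deriv (deriv (fun x => u t x))) := by
      rw [← continuousOn_univ]
      exact cdxx.comp (f := fun x : ℝ => (t, x)) (by fun_prop) fun x _ => ⟨ht, trivial⟩
    have h1 : ContDiff ℝ 1 (deriv (fun x => u t x)) :=
      contDiff_one_iff_deriv.2 ⟨fun x => (dxx t ht.2 x).differentiableAt, h2⟩
    exact (contDiff_succ_iff_deriv (n := 1)).2
      ⟨fun x => (dx t ht.2 x).differentiableAt, by simp, h1⟩
  · refine ContinuousOn.congr ?_ fun z hz => (dt z.1 (hlt z hz) z.2).deriv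
    fun_prop
  · refine ContinuousOn.congr ?_ fun z hz => (dx z.1 (hlt z hz) z.2).deriv
    fun_prop
  · intro t ht x
    rw [(dt t ht.2 x).deriv, (dxx t ht.2 x).deriv, (dx t ht.2 x).deriv, hueq t ht.2 x]
    have hv := hS t ht.2
    have a2 : -vQt β σ s t + σ ^ 2 / 2 * vPx β σ s t ^ 2 = 0 := by
      unfold vQt vPx
      field_simp
      ring
    have a1 : vPt α β σ s t x + (α + β * x) * vPx β σ s t
        + σ ^ 2 * vCx α β σ s t x * vPx β σ s t = 0 := by
      simp only [vPt, vPx, vCx]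
      have := (Real.exp_pos (β * (s - t))).ne'
      generalize Real.exp (β * (s - t)) = E at *
      generalize vasicekSigmaSq β σ t s = v at *
      field_simp
      ring
    have a0 : vCt α β σ s t x + (α + β * x) * vCx α β σ s t x
        + σ ^ 2 / 2 * (vCx α β σ s t x ^ 2 + vCxx β σ s t) - x = 0 := by
      simp only [vCt, vCxx, vCx]
      have := (Real.exp_pos (β * (s - t))).ne'
      generalize Real.exp (β * (s - t)) = E at *
      generalize vasicekSigmaSq β σ t s = v at *
      field_simp
      ring
    linear_combination Real.exp (vC α β σ s t x) * (a0 * vM g 0 (vP α β σ s t x) (vQ β σ s t)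
      + a1 * vM g 1 (vP α β σ s t x) (vQ β σ s t) + a2 * vM g 2 (vP α β σ s t x) (vQ β σ s t))
  · intro x
    have h : (fun t => u t x) = fun t => ∫ ξ : ℝ, vasicekG α β σ t s x ξ * g ξ :=
      funext fun t => hu t x
    rw [h]
    exact vterm α β σ s hβ hσ g hg C c hgrow hc x
end

section
/- Let α ∈ ℝ, β < 0, σ > 0, and let G be the Vasicek Green's function. For every fixed s > 0 and ξ ∈ ℝ, the function (t,x) ↦ G(t,s;x,ξ) satisfies the backward Kolmogorov equation ∂ₜG(t,s;x,ξ) + (α + βx)·∂ₓG(t,s;x,ξ) + (σ²/2)·∂²ₓₓG(t,s;x,ξ) − x·G(t,s;x,ξ) = 0 for all t < s and all x ∈ ℝ. -/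
theorem vasicek_gen_deriv (P : ℝ) (c1 c2 S m : ℝ → ℝ) (c1' c2' S' m' ξ t : ℝ)
    (hP : P ≠ 0) (hS : 0 < S t)
    (h1 : HasDerivAt c1 c1' t) (h2 : HasDerivAt c2 c2' t)
    (h3 : HasDerivAt S S' t) (h4 : HasDerivAt m m' t) :
    HasDerivAt (fun r => Real.exp (c1 r) * Real.exp (c2 r) / (P * Real.sqrt (S r)) *
        Real.exp (-((ξ - m r) ^ 2 / (2 * S r))))
      (Real.exp (c1 t) * Real.exp (c2 t) / (P * Real.sqrt (S t)) *
        Real.exp (-((ξ - m t) ^ 2 / (2 * S t))) *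
        (c1' + c2' - S' / (2 * S t) + (ξ - m t) * m' / S t
          + (ξ - m t) ^ 2 * S' / (2 * S t ^ 2))) t := by
  have hq : Real.sqrt (S t) ≠ 0 := (Real.sqrt_pos.mpr hS).ne'
  have h := ((h1.exp.mul h2.exp).div ((h3.sqrt hS.ne').const_mul P) (mul_ne_zero hP hq)).mul
    ((((h4.const_sub ξ).pow 2).div (h3.const_mul 2) (by positivity)).neg.exp)
  refine h.congr_deriv ?_
  have hsq : S t = Real.sqrt (S t) ^ 2 := (Real.sq_sqrt hS.le).symm
  simp only [Pi.mul_apply, Pi.div_apply, Pi.neg_apply, Pi.pow_apply]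
  generalize Real.exp (-((ξ - m t) ^ 2 / (2 * S t))) = e
  generalize Real.sqrt (S t) = q at *
  rw [hsq]
  field_simp
  ring

/-- For fixed `s > 0` and `ξ`, the Vasicek Green's function `(t,x) ↦ G(t,s;x,ξ)`
satisfies the backward Kolmogorov equation
`∂ₜG + (α + βx)∂ₓG + (σ²/2)∂²ₓₓG − xG = 0` for all `t < s` and `x ∈ ℝ`. -/
theorem vasicek_green_backward_kolmogorov
    (α β σ : ℝ) (hβ : β < 0) (hσ : 0 < σ) :
    ∀ s : ℝ, 0 < s → ∀ ξ : ℝ, ∀ t : ℝ, t < s → ∀ x : ℝ,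
      deriv (fun r => vasicekG α β σ r s x ξ) t
        + (α + β * x) * deriv (fun y => vasicekG α β σ t s y ξ) x
        + σ ^ 2 / 2 * deriv (deriv (fun y => vasicekG α β σ t s y ξ)) x
        - x * vasicekG α β σ t s x ξ = 0 := by
  intro s _ ξ t ht x
  have hb : β ≠ 0 := hβ.ne
  have hst : 0 < s - t := sub_pos.mpr ht
  have hE : HasDerivAt (fun r => Real.exp (β * (s - r))) (-β * Real.exp (β * (s - t))) t :=
    ((((hasDerivAt_id t).const_sub s).const_mul β).exp).congr_deriv (by simp; ring)
  have hE2 : HasDerivAt (fun r => Real.exp (2 * β * (s - r)))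
      (-(2 * β) * Real.exp (2 * β * (s - t))) t :=
    ((((hasDerivAt_id t).const_sub s).const_mul (2 * β)).exp).congr_deriv (by simp; ring)
  have hF : HasDerivAt (fun r => Real.exp (-(β * (s - r)))) (β * Real.exp (-(β * (s - t)))) t :=
    ((((hasDerivAt_id t).const_sub s).const_mul β).neg.exp).congr_deriv (by simp; ring)
  have hF2 : HasDerivAt (fun r => Real.exp (-(2 * β * (s - r))))
      (2 * β * Real.exp (-(2 * β * (s - t)))) t :=
    ((((hasDerivAt_id t).const_sub s).const_mul (2 * β)).neg.exp).congr_deriv (by simp; ring)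
  have hSpos : 0 < vasicekSigmaSq β σ t s := by
    unfold vasicekSigmaSq
    have h1 : Real.exp (2 * β * (s - t)) < 1 := by
      rw [Real.exp_lt_one_iff]; nlinarith
    have h2 : 0 < -(σ ^ 2 / (2 * β)) := by
      rw [← div_neg]; apply div_pos (by positivity); linarith
    exact mul_pos h2 (by linarith)
  have hP : Real.sqrt (2 * Real.pi) ≠ 0 := by positivity
  have hS : HasDerivAt (fun r => vasicekSigmaSq β σ r s) _ t :=
    (hE2.const_sub 1).const_mul (-(σ ^ 2 / (2 * β)))
  have hm : HasDerivAt (fun r => vasicekMu α β σ r s x) _ t :=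
    ((hE.const_mul x).sub ((hE.const_sub 1).const_mul (α / β))).add
      (((hF.add hE).sub_const 2).const_mul (σ ^ 2 / (2 * β ^ 2)))
  have hc1 := (((((hF2.const_mul (σ ^ 2)).sub (hF.const_mul (4 * ξ * β ^ 2))).sub
    (hF.const_mul (4 * σ ^ 2))).sub (hF.const_mul (4 * α * β))).div_const (4 * β ^ 3)).neg
  have hc2 := ((((((hasDerivAt_id t).const_sub s).const_mul
    (σ ^ 2 / (2 * β ^ 2) + α / β)).sub_const (3 * σ ^ 2 / (4 * β ^ 3))).sub_const
    (ξ / β)).sub_const (α / β ^ 2))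
  have hT : HasDerivAt (fun r => vasicekG α β σ r s x ξ) (vasicekG α β σ t s x ξ * _) t :=
    vasicek_gen_deriv (Real.sqrt (2 * Real.pi)) _ _ _ _ _ _ _ _ ξ t hP hSpos hc1 hc2 hS hm
  have hmx : ∀ y, HasDerivAt (fun y => vasicekMu α β σ t s y) (Real.exp (β * (s - t))) y := by
    intro y
    exact ((((hasDerivAt_id y).mul_const (Real.exp (β * (s - t)))).sub_const _).add_const
      _).congr_deriv (by simp)
  have hX : ∀ y, HasDerivAt (fun y => vasicekG α β σ t s y ξ)
      (vasicekG α β σ t s y ξ * ((ξ - vasicekMu α β σ t s y) * Real.exp (β * (s - t))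
        / vasicekSigmaSq β σ t s)) y := by
    intro y
    have h : HasDerivAt (fun y => vasicekG α β σ t s y ξ) (vasicekG α β σ t s y ξ * _) y :=
      vasicek_gen_deriv (Real.sqrt (2 * Real.pi)) _ _ _ _ _ _ _ _ ξ y hP hSpos
      (hasDerivAt_const y _) (hasDerivAt_const y _)
      (hasDerivAt_const y (vasicekSigmaSq β σ t s)) (hmx y)
    exact h.congr_deriv (by simp)
  have hX1 : deriv (fun y => vasicekG α β σ t s y ξ) = fun y =>
      vasicekG α β σ t s y ξ * ((ξ - vasicekMu α β σ t s y) * Real.exp (β * (s - t))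
        / vasicekSigmaSq β σ t s) := funext fun y => (hX y).deriv
  have hX2 := (hX x).mul ((((hmx x).const_sub ξ).mul_const
    (Real.exp (β * (s - t)))).div_const (vasicekSigmaSq β σ t s))
  have hX3 : deriv (fun y =>
      vasicekG α β σ t s y ξ * ((ξ - vasicekMu α β σ t s y) * Real.exp (β * (s - t))
        / vasicekSigmaSq β σ t s)) x = _ := hX2.deriv
  rw [hX1, hX3, hT.deriv]
  beta_reduce
  generalize vasicekG α β σ t s x ξ = g
  have hSne := hSpos.ne'
  have e2 : Real.exp (2 * β * (s - t)) = Real.exp (β * (s - t)) ^ 2 := by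
    rw [← Real.exp_nat_mul]; congr 1; push_cast; ring
  have e3 : Real.exp (-(β * (s - t))) = (Real.exp (β * (s - t)))⁻¹ := Real.exp_neg _
  have e4 : Real.exp (-(2 * β * (s - t))) = ((Real.exp (β * (s - t))) ^ 2)⁻¹ := by
    rw [Real.exp_neg, e2]
  unfold vasicekMu
  unfold vasicekSigmaSq at hSne ⊢
  rw [e2] at hSne
  simp only [e2, e3, e4]
  have hEne := (Real.exp_pos (β * (s - t))).ne'
  generalize Real.exp (β * (s - t)) = E at *
  have hE1 : 1 - E ^ 2 ≠ 0 := right_ne_zero_of_mul hSne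
  have hσ' := hσ.ne'
  field_simp
  ring
end
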